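/- arXiv:1709.02947 — 3 statements merged into one kernel-verified Lean document; each statement's English description precedes it below -/
import Mathlib

section
/- Let $\mathfrak{h}$ be a Lie algebra over a field $k$, let $V$ and $W$ be finite-dimensional representations of $\mathfrak{h}$, and let $\tilde{k}/k$ be a field extension. If $V \otimes_k \tilde{k}$ and $W \otimes_k \tilde{k}$ are isomorphic as representations of $\mathfrak{h} \otimes_k \tilde{k}$, then $V$ and $W$ are isomorphic as representations of $\mathfrak{h}$. -/
open TensorProduct

/-!
Let `K` be a nonzero commutative `k`-algebra. Being free over `k`, it satisfies
`K ⊗ Hom_𝔥(V, W) ≃ Hom_{K ⊗ 𝔥}(K ⊗ V, K ⊗ W)`: a tensor is invariant under `𝔥` exactly when all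
its coordinates with respect to a basis of `K` are.

If `k` is infinite, write the given isomorphism as `∑ cⱼ gⱼ` with `cⱼ ∈ K` and `gⱼ` a basis of
`Hom_𝔥(V, W)`. The polynomial `det (∑ Xⱼ gⱼ)` over `k` does not vanish at `c`, so it is nonzero and
does not vanish at some point of `k`.

If `k` is finite, the spaces `Hom_𝔥(V, Z)` and `Hom_𝔥(W, Z)` have the same dimension, hence the same
number of elements, for every subrepresentation `Z` of `W`. By induction on `Z` there are as many
maps with range exactly `Z` from `V` as from `W`. For `Z = W` the identity of `W` is one, so there
is a surjection from `V` to `W`, and it is bijective because `V` and `W` have the same dimension.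
-/

section Fibers

variable {P A B : Type*} [PartialOrder P] [Finite A] [Finite B]

theorem natCard_le_eq_natCard_eq_add_natCard_lt (r : A → P) (z : P) :
    Nat.card {a // r a ≤ z} = Nat.card {a // r a = z} + Nat.card {a // r a < z} := by
  classical
  have hdisj : Disjoint (fun a ↦ r a = z) (fun a ↦ r a < z) :=
    Pi.disjoint_iff.2 fun _ ↦ Prop.disjoint_iff.2 fun h ↦ h.2.ne h.1
  rw [← Nat.card_sum]
  exact Nat.card_congr <|
    (Equiv.subtypeEquivRight fun _ ↦ le_iff_eq_or_lt).trans (subtypeOrEquiv _ _ hdisj)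

theorem natCard_fiber_eq_of_natCard_le_eq [WellFoundedLT P] {r : A → P} {s : B → P}
    (h : ∀ z, Nat.card {a // r a ≤ z} = Nat.card {b // s b ≤ z}) (z : P) :
    Nat.card {a // r a = z} = Nat.card {b // s b = z} := by
  induction z using WellFoundedLT.induction with
  | ind z ih =>
    have hlt : Nat.card {a // r a < z} = Nat.card {b // s b < z} :=
      Nat.card_congr <|
        (Equiv.sigmaSubtypeFiberEquivSubtype r fun _ ↦ Iff.rfl).symm.trans <|
        (Equiv.sigmaCongrRight fun t : {t // t < z} ↦ (Finite.card_eq.1 (ih t t.2)).some).trans <|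
        Equiv.sigmaSubtypeFiberEquivSubtype s fun _ ↦ Iff.rfl
    have hle := h z
    rw [natCard_le_eq_natCard_eq_add_natCard_lt, natCard_le_eq_natCard_eq_add_natCard_lt,
      hlt] at hle
    exact Nat.add_right_cancel hle

end Fibers

section Determinant

variable {R S n ι : Type*} [CommRing R] [CommRing S] [Algebra R S] [Fintype n] [DecidableEq n]
  [Fintype ι]

theorem aeval_det_sum_X_smul_map_C (B : ι → Matrix n n R) (x : ι → S) :
    MvPolynomial.aeval x
        (∑ i, (MvPolynomial.X i : MvPolynomial ι R) • (B i).map MvPolynomial.C).det =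
      (∑ i, x i • (B i).map (algebraMap R S)).det := by
  rw [AlgHom.map_det]
  congr 1
  ext p q
  simp [Matrix.sum_apply]

theorem exists_det_sum_smul_ne_zero [IsDomain R] [Infinite R] (B : ι → Matrix n n R) {c : ι → S}
    (hc : (∑ i, c i • (B i).map (algebraMap R S)).det ≠ 0) :
    ∃ a : ι → R, (∑ i, a i • B i).det ≠ 0 := by
  contrapose! hc
  rw [← aeval_det_sum_X_smul_map_C]
  convert map_zero (MvPolynomial.aeval c)
  refine MvPolynomial.funext fun a ↦ ?_
  rw [← MvPolynomial.aeval_eq_eval, aeval_det_sum_X_smul_map_C]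
  simpa using hc a

end Determinant

section LieModule

variable {R L M M' N : Type*} [CommRing R] [LieRing L]
  [AddCommGroup M] [Module R M] [LieRingModule L M]
  [AddCommGroup M'] [Module R M'] [LieRingModule L M']
  [AddCommGroup N] [Module R N] [LieRingModule L N]

/-- A bijective morphism of Lie modules, as an isomorphism. -/
noncomputable def lieModuleEquivOfBijective (f : M →ₗ⁅R,L⁆ N) (hf : Function.Bijective f) :
    M ≃ₗ⁅R,L⁆ N :=
  { LinearEquiv.ofBijective (f : M →ₗ[R] N) hf, f with }

/-- Morphisms of Lie modules into a submodule `Z` of `N`, as morphisms into `N` with range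
contained in `Z`. -/
def lieHomSubmoduleEquiv (Z : LieSubmodule R L N) :
    (M →ₗ⁅R,L⁆ Z) ≃ {f : M →ₗ⁅R,L⁆ N // f.range ≤ Z} where
  toFun f := ⟨Z.incl.comp f, by
    intro y hy
    obtain ⟨x, rfl⟩ := (LieModuleHom.mem_range _ _).1 hy
    exact (f x).2⟩
  invFun f := f.1.codRestrict Z fun x ↦ f.2 ((LieModuleHom.mem_range _ _).2 ⟨x, rfl⟩)
  left_inv _ := rfl
  right_inv _ := rfl

theorem nonempty_lieModuleEquiv_of_natCard_lieHom_eq [Finite M] [Finite N]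
    (hcard : Nat.card M = Nat.card N)
    (h : ∀ Z : LieSubmodule R L N, Nat.card (M →ₗ⁅R,L⁆ Z) = Nat.card (N →ₗ⁅R,L⁆ Z)) :
    Nonempty (M ≃ₗ⁅R,L⁆ N) := by
  have := DFunLike.finite (M →ₗ⁅R,L⁆ N)
  have := DFunLike.finite (N →ₗ⁅R,L⁆ N)
  have hrange (Z : LieSubmodule R L N) : Nat.card {f : M →ₗ⁅R,L⁆ N // f.range = Z} =
      Nat.card {f : N →ₗ⁅R,L⁆ N // f.range = Z} :=
    natCard_fiber_eq_of_natCard_le_eq (fun Z ↦ by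
      rw [← Nat.card_congr (lieHomSubmoduleEquiv Z), h, Nat.card_congr (lieHomSubmoduleEquiv Z)]) Z
  obtain ⟨e⟩ := Finite.card_eq.1 (hrange ⊤)
  obtain ⟨f, hf⟩ := e.symm ⟨LieModuleHom.id, (LieModuleHom.range_eq_top _).2 Function.surjective_id⟩
  exact ⟨lieModuleEquivOfBijective f <|
    (Nat.bijective_iff_surjective_and_card f).2 ⟨(LieModuleHom.range_eq_top f).1 hf, hcard⟩⟩

variable [LieAlgebra R L] [LieModule R L N]

theorem toLinearMap_sum_smul {ι : Type*} (s : Finset ι) (c : ι → R) (f : ι → M →ₗ⁅R,L⁆ N) :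
    ((∑ i ∈ s, c i • f i : M →ₗ⁅R,L⁆ N) : M →ₗ[R] N) = ∑ i ∈ s, c i • (f i : M →ₗ[R] N) := by
  induction s using Finset.cons_induction with
  | empty => rfl
  | cons i s hi ih =>
    rw [Finset.sum_cons, Finset.sum_cons, ← ih]
    rfl

variable (N) in
/-- Precomposition with the inverse of an isomorphism of Lie modules. -/
def lieHomCongrLeft (e : M ≃ₗ⁅R,L⁆ M') : (M →ₗ⁅R,L⁆ N) ≃ₗ[R] (M' →ₗ⁅R,L⁆ N) where
  toFun f := f.comp (e.symm : M' →ₗ⁅R,L⁆ M)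
  invFun f := f.comp (e : M →ₗ⁅R,L⁆ M')
  map_add' _ _ := rfl
  map_smul' _ _ := rfl
  left_inv f := by ext; simp
  right_inv f := by ext; simp

theorem finite_lieHom [IsNoetherianRing R] [LieModule R L M] [Module.Finite R M]
    [Module.Finite R N] : Module.Finite R (M →ₗ⁅R,L⁆ N) :=
  .equiv LieModule.maxTrivLinearMapEquivLieModuleHom

end LieModule

section BaseChange

variable (R A L M N : Type*) [CommRing R] [CommRing A] [Algebra R A]
  [AddCommGroup M] [Module R M] [AddCommGroup N] [Module R N]

variable {R A M N} in
theorem finrank_eq_of_baseChange_equiv [Nontrivial A] [Module.Free R M] [Module.Free R N]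
    (e : A ⊗[R] M ≃ₗ[A] A ⊗[R] N) : Module.finrank R M = Module.finrank R N := by
  have : Nontrivial R := (algebraMap R A).domain_nontrivial
  simpa only [Module.finrank_baseChange] using e.finrank_eq

theorem isBaseChange_baseChangeHom [Module.Free R M] [Module.Finite R M] :
    IsBaseChange A (LinearMap.baseChangeHom R A M N) := by
  convert! (TensorProduct.isBaseChange R M A).linearMapLeftRight (TensorProduct.isBaseChange R N A)
  ext f m
  exact (IsBaseChange.linearMapLeftRightHom_comp_apply
    (TensorProduct.isBaseChange R M A) (TensorProduct.mk R A N 1) f m).symm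

variable [LieRing L] [LieAlgebra R L] [LieRingModule L M] [LieModule R L M]
  [LieRingModule L N] [LieModule R L N]

theorem maxTrivSubmodule_baseChange [Module.Free R A] :
    LieModule.maxTrivSubmodule A (A ⊗[R] L) (A ⊗[R] M) =
      (LieModule.maxTrivSubmodule R L M).baseChange A := by
  apply le_antisymm
  · intro z hz
    let b := Module.Free.chooseBasis R A
    obtain ⟨c, rfl⟩ := TensorProduct.eq_repr_basis_left b z
    refine Submodule.sum_mem _ fun i _ ↦ LieSubmodule.tmul_mem_baseChange_of_mem _ fun x ↦ ?_
    have hx : (Finsupp.mapRange.linearMap (LieModule.toEnd R L M x) c).sum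
        (fun i m ↦ b i ⊗ₜ[R] m) = 0 := by
      rw [Finsupp.mapRange.linearMap_apply, Finsupp.sum_mapRange_index (by simp),
        ← hz (1 ⊗ₜ x)]
      simp [Finsupp.sum, lie_sum]
    simpa using DFunLike.congr_fun (TensorProduct.sum_tmul_basis_left_eq_zero b _ hx) i
  · rw [← LieSubmodule.toSubmodule_le_toSubmodule, LieSubmodule.coe_baseChange,
      Submodule.baseChange_eq_span, Submodule.span_le]
    rintro _ ⟨m, hm, rfl⟩ x
    induction x with
    | zero => simp
    | tmul a x => simp [hm x]
    | add x y hx hy => simp only [add_lie, hx, hy, add_zero]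

variable {R A L M N} in
theorem tmul_lie_smul_baseChange (a : A) (x : L) (c : A) (f : M →ₗ[R] N) :
    ⁅a ⊗ₜ[R] x, c • f.baseChange A⁆ = (a * c) • ⁅x, f⁆.baseChange A := by
  ext m
  simp [TensorProduct.tmul_sub, TensorProduct.smul_tmul', smul_sub, mul_comm]

variable [Module.Free R M] [Module.Finite R M]

/-- Base change commutes with linear maps out of a finite free Lie module, as Lie modules. It sends
`a ⊗ f` to `a • f.baseChange A`. -/
noncomputable def linearMapBaseChangeEquiv :
    A ⊗[R] (M →ₗ[R] N) ≃ₗ⁅A,A ⊗[R] L⁆ (A ⊗[R] M →ₗ[A] A ⊗[R] N) :=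
  { (isBaseChange_baseChangeHom R A M N).equiv with
    map_lie' := by
      intro x t
      change (isBaseChange_baseChangeHom R A M N).equiv _ =
        ⁅x, (isBaseChange_baseChangeHom R A M N).equiv t⁆
      induction x with
      | zero => simp
      | add x y hx hy => rw [add_lie, map_add, hx, hy, add_lie]
      | tmul a x =>
        induction t with
        | zero =>
          rw [lie_zero, map_zero]
          exact (lie_zero (M := A ⊗[R] M →ₗ[A] A ⊗[R] N) _).symm
        | add t u ht hu =>
          rw [lie_add, map_add, ht, hu, map_add]
          exact (lie_add _ _ _).symm
        | tmul c f =>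
          rw [LieAlgebra.ExtendScalars.bracket_tmul, IsBaseChange.equiv_tmul,
            IsBaseChange.equiv_tmul]
          exact (tmul_lie_smul_baseChange a x c f).symm }

/-- Base change commutes with the space of morphisms out of a finite free Lie module, for free
coefficient algebras: these morphisms are the invariants of the space of linear maps. -/
noncomputable def lieHomBaseChangeEquiv [Module.Free R A] :
    A ⊗[R] (M →ₗ⁅R,L⁆ N) ≃ₗ[A] (A ⊗[R] M →ₗ⁅A,A ⊗[R] L⁆ A ⊗[R] N) :=
  (LieModule.maxTrivLinearMapEquivLieModuleHom.symm.baseChange R A _ _).trans <|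
  (Submodule.toBaseChange.toLinearEquiv A
    (LieModule.maxTrivSubmodule R L (M →ₗ[R] N)).toSubmodule).trans <|
  (LinearEquiv.ofEq _ _ (congrArg LieSubmodule.toSubmodule
    (maxTrivSubmodule_baseChange R A L (M →ₗ[R] N)).symm)).trans <|
  (LieModule.maxTrivEquiv (linearMapBaseChangeEquiv R A L M N)).toLinearEquiv.trans
    LieModule.maxTrivLinearMapEquivLieModuleHom

variable {R A L M N}

theorem toLinearMap_lieHomBaseChangeEquiv_tmul [Module.Free R A] (a : A) (f : M →ₗ⁅R,L⁆ N) :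
    (lieHomBaseChangeEquiv R A L M N (a ⊗ₜ f) : A ⊗[R] M →ₗ[A] A ⊗[R] N) =
      a • (f : M →ₗ[R] N).baseChange A :=
  (isBaseChange_baseChangeHom R A M N).equiv_tmul a (f : M →ₗ[R] N)

theorem exists_toLinearMap_eq_sum_smul_baseChange [Module.Free R A] {ι : Type*} [Fintype ι]
    (g : Module.Basis ι R (M →ₗ⁅R,L⁆ N)) (F : A ⊗[R] M →ₗ⁅A,A ⊗[R] L⁆ A ⊗[R] N) :
    ∃ c : ι → A, (F : A ⊗[R] M →ₗ[A] A ⊗[R] N) =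
      ∑ j, c j • (g j : M →ₗ[R] N).baseChange A := by
  let b := (g.baseChange A).map (lieHomBaseChangeEquiv R A L M N)
  have hb (j) : (b j : A ⊗[R] M →ₗ[A] A ⊗[R] N) = (g j : M →ₗ[R] N).baseChange A := by
    simp [b, toLinearMap_lieHomBaseChangeEquiv_tmul]
  refine ⟨b.repr F, ?_⟩
  conv_lhs => rw [← b.sum_repr F, toLinearMap_sum_smul]
  simp only [hb]

theorem finrank_lieHom_baseChange [Module.Free R A] [Nontrivial A]
    [Module.Free R (M →ₗ⁅R,L⁆ N)] :
    Module.finrank A (A ⊗[R] M →ₗ⁅A,A ⊗[R] L⁆ A ⊗[R] N) = Module.finrank R (M →ₗ⁅R,L⁆ N) := by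
  have : Nontrivial R := (algebraMap R A).domain_nontrivial
  rw [← (lieHomBaseChangeEquiv R A L M N).finrank_eq, Module.finrank_baseChange]

end BaseChange

section Field

variable {k K L V W : Type*} [Field k] [CommRing K] [Nontrivial K] [Algebra k K]
  [LieRing L] [LieAlgebra k L]
  [AddCommGroup V] [Module k V] [LieRingModule L V] [LieModule k L V] [FiniteDimensional k V]
  [AddCommGroup W] [Module k W] [LieRingModule L W] [LieModule k L W] [FiniteDimensional k W]

theorem nonempty_lieModuleEquiv_of_baseChange_of_infinite [Infinite k]
    (e : (K ⊗[k] V) ≃ₗ⁅K,K ⊗[k] L⁆ (K ⊗[k] W)) : Nonempty (V ≃ₗ⁅k,L⁆ W) := by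
  have := finite_lieHom (R := k) (L := L) (M := V) (N := W)
  let g := Module.finBasis k (V →ₗ⁅k,L⁆ W)
  let v := Module.finBasis k V
  let w := Module.finBasisOfFinrankEq k W (finrank_eq_of_baseChange_equiv e.toLinearEquiv).symm
  obtain ⟨c, hc⟩ := exists_toLinearMap_eq_sum_smul_baseChange g e.toLieModuleHom
  have hdet : (∑ j, c j •
      (LinearMap.toMatrix v w (g j : V →ₗ[k] W)).map (algebraMap k K)).det ≠ 0 := by
    have he := (e.toLinearEquiv.isUnit_det (Algebra.TensorProduct.basis K v)
      (Algebra.TensorProduct.basis K w)).ne_zero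
    have hc' : (e.toLinearEquiv : K ⊗[k] V →ₗ[K] K ⊗[k] W) = _ := hc
    simpa only [hc', map_sum, map_smul, LinearMap.toMatrix_baseChange] using he
  obtain ⟨a, ha⟩ := exists_det_sum_smul_ne_zero _ hdet
  let f : V →ₗ⁅k,L⁆ W := ∑ j, a j • g j
  have hf : IsUnit (LinearMap.toMatrix v w (f : V →ₗ[k] W)).det := by
    simpa only [f, toLinearMap_sum_smul, map_sum, map_smul] using ha.isUnit
  exact ⟨lieModuleEquivOfBijective f (LinearEquiv.ofIsUnitDet hf).bijective⟩

theorem nonempty_lieModuleEquiv_of_baseChange_of_finite [Finite k]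
    (e : (K ⊗[k] V) ≃ₗ⁅K,K ⊗[k] L⁆ (K ⊗[k] W)) : Nonempty (V ≃ₗ⁅k,L⁆ W) := by
  have := Module.finite_of_finite k (M := V)
  have := Module.finite_of_finite k (M := W)
  refine nonempty_lieModuleEquiv_of_natCard_lieHom_eq ?_ fun Z ↦ ?_
  · rw [Module.natCard_eq_pow_finrank (K := k), Module.natCard_eq_pow_finrank (K := k) (V := W),
      finrank_eq_of_baseChange_equiv e.toLinearEquiv]
  · have := finite_lieHom (R := k) (L := L) (M := V) (N := Z)
    have := finite_lieHom (R := k) (L := L) (M := W) (N := Z)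
    rw [Module.natCard_eq_pow_finrank (K := k) (V := V →ₗ⁅k,L⁆ Z),
      Module.natCard_eq_pow_finrank (K := k) (V := W →ₗ⁅k,L⁆ Z),
      ← finrank_lieHom_baseChange (A := K), (lieHomCongrLeft (K ⊗[k] Z) e).finrank_eq,
      finrank_lieHom_baseChange]

end Field

theorem stmt_8_general (k K h V W : Type*) [Field k] [CommRing K] [Nontrivial K] [Algebra k K]
    [LieRing h] [LieAlgebra k h]
    [AddCommGroup V] [Module k V] [LieRingModule h V] [LieModule k h V]
    [FiniteDimensional k V]
    [AddCommGroup W] [Module k W] [LieRingModule h W] [LieModule k h W]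
    (hiso : Nonempty ((K ⊗[k] V) ≃ₗ⁅K,K ⊗[k] h⁆ (K ⊗[k] W))) :
    Nonempty (V ≃ₗ⁅k,h⁆ W) := by
  obtain ⟨e⟩ := hiso
  have : Module.Finite K (K ⊗[k] W) := .equiv e.toLinearEquiv
  have : FiniteDimensional k W := .of_finite_tensorProduct_of_faithfullyFlat K
  cases finite_or_infinite k with
  | inl _ => exact nonempty_lieModuleEquiv_of_baseChange_of_finite e
  | inr _ => exact nonempty_lieModuleEquiv_of_baseChange_of_infinite e

/-- If two finite-dimensional representations of a Lie algebra `𝔥` become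
isomorphic after a field extension `k̃/k`, then they are already isomorphic over `k`. -/
theorem stmt_8 (k K h V W : Type*) [Field k] [Field K] [Algebra k K]
    [LieRing h] [LieAlgebra k h]
    [AddCommGroup V] [Module k V] [LieRingModule h V] [LieModule k h V]
    [FiniteDimensional k V]
    [AddCommGroup W] [Module k W] [LieRingModule h W] [LieModule k h W]
    [FiniteDimensional k W]
    (hiso : Nonempty ((K ⊗[k] V) ≃ₗ⁅K, K ⊗[k] h⁆ (K ⊗[k] W))) :
    Nonempty (V ≃ₗ⁅k, h⁆ W) :=
  stmt_8_general k K h V W hiso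
end

section
/- Let $k$ be a field of characteristic zero, and let $W$ be a finite-dimensional irreducible representation of $\mathfrak{sl}(2,k)$ with $\dim W \neq 2$. If $P : W \times W \to \mathfrak{sl}(2,k)$ is a symmetric bilinear map satisfying (1) $P(u,v)(w) + P(v,w)(u) + P(w,u)(v) = 0$ and (2) $[x, P(u,v)] = P(x(u),v) + P(u,x(v))$ for all $x \in \mathfrak{sl}(2,k)$ and $u,v,w \in W$, then $P \equiv 0$. -/
/-- The Lie algebra `sl(2,k)` of traceless `2 × 2` matrices. -/
abbrev sl2 (k : Type*) [Field k] : Type _ := ↥(LieAlgebra.SpecialLinear.sl (Fin 2) k)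

/-!
Let `v` be a highest weight vector of `W`, of weight `m`, so that `dim W = m + 1`. The value `P v v`
is killed by `e` and has weight `2 * m`, while the only vectors of the adjoint representation killed
by `e` are the multiples of `e`, of weight `2`; as `m ≠ 1`, this forces `P v v = 0`, which settles
the case `W = k ∙ v` of `m = 0`. The cyclic identity for `v, v, w` now says that `P v w` annihilates
`v`, so for `m ≠ 0` it is a multiple of `e`. Comparing weights, `P v (fʲ v)` can only be nonzero for
`j = m - 1`. But `f ^ (m - 1) v` is a multiple of `e (f ^ m v)`, and
`P v (e w) = ⁅e, P v w⁆ - P (e v) w = 0`. Since the `fʲ v` span `W`, we get `P v = 0`, and the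
kernel of `P` is a nonzero submodule of the irreducible module `W`.
-/

namespace SlTwo

open LieModule Module

attribute [local instance] LieRing.ofAssociativeRing

section AssociativeAlgebra

lemma lie_pow_of_lie_eq_smul {R A : Type*} [CommRing R] [Ring A] [Algebra R A] {x y : A} {c : R}
    (hxy : ⁅x, y⁆ = c • y) (n : ℕ) : ⁅x, y ^ n⁆ = (n * c) • y ^ n := by
  induction n with
  | zero => simp [Ring.lie_def]
  | succ n ih =>
    calc ⁅x, y ^ (n + 1)⁆ = ⁅x, y ^ n⁆ * y + y ^ n * ⁅x, y⁆ := by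
          simp only [Ring.lie_def]; noncomm_ring
      _ = (↑(n + 1) * c) • y ^ (n + 1) := by
          rw [ih, hxy, smul_mul_assoc, mul_smul_comm, ← pow_succ, ← add_smul]
          push_cast
          ring_nf

lemma isNilpotent_of_lie_eq_smul {k A : Type*} [Field k] [CharZero k] [Ring A] [Algebra k A]
    [FiniteDimensional k A] {x y : A} {c : k} (hc : c ≠ 0) (hxy : ⁅x, y⁆ = c • y) :
    IsNilpotent y := by
  by_contra hy
  have hne (n : ℕ) : y ^ n ≠ 0 := fun hn ↦ hy ⟨n, hn⟩
  have hinj : Function.Injective fun n : ℕ ↦ (n * c : k) :=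
    (mul_left_injective₀ hc).comp Nat.cast_injective
  have hli : LinearIndependent k fun n : ℕ ↦ y ^ n :=
    (LieAlgebra.ad k A x).eigenvectors_linearIndependent' _ hinj _ fun n ↦
      ⟨End.mem_eigenspace_iff.mpr (lie_pow_of_lie_eq_smul hxy n), hne n⟩
  exact not_finite_iff_infinite.mpr inferInstance hli.finite

lemma exists_ne_zero_apply_eq_zero_of_isNilpotent {R M : Type*} [Semiring R] [AddCommMonoid M]
    [Module R M] [Nontrivial M] {φ : End R M} (hφ : IsNilpotent φ) : ∃ v ≠ 0, φ v = 0 := by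
  obtain ⟨n, hn⟩ := hφ
  obtain ⟨w, hw⟩ := exists_ne (0 : M)
  obtain ⟨i, hi, hi'⟩ := Nat.exists_not_and_succ_of_not_zero_of_exists
    (p := fun i ↦ (φ ^ i) w = 0) (by simpa using hw) ⟨n, by simp [hn]⟩
  exact ⟨(φ ^ i) w, hi, by rwa [pow_succ', End.mul_apply] at hi'⟩

end AssociativeAlgebra

section Triple

variable {R L M : Type*} [CommRing R] [LieRing L] [LieAlgebra R L]
  [AddCommGroup M] [Module R M] [LieRingModule L M] [LieModule R L M] {h e f : L}

lemma hasPrimitiveVectorWith_e (t : IsSl2Triple h e f) : t.HasPrimitiveVectorWith e (2 : R) where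
  ne_zero := t.e_ne_zero
  lie_h := t.lie_h_e_smul R
  lie_e := lie_self e

lemma toEnd_lie_h_e (t : IsSl2Triple h e f) :
    ⁅toEnd R L M h, toEnd R L M e⁆ = (2 : R) • toEnd R L M e := by
  rw [← LieHom.map_lie, t.lie_h_e_smul R, map_smul]

lemma toEnd_lie_h_f (t : IsSl2Triple h e f) :
    ⁅toEnd R L M h, toEnd R L M f⁆ = (-2 : R) • toEnd R L M f := by
  rw [← LieHom.map_lie, t.lie_lie_smul_f R, map_neg, map_smul, neg_smul]

lemma lie_h_pow_toEnd_f_apply (t : IsSl2Triple h e f) (n : ℕ) (u : M) :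
    ⁅h, (toEnd R L M f ^ n) u⁆ = (toEnd R L M f ^ n) (⁅h, u⁆ - (2 * n : R) • u) := by
  have hpow := LinearMap.congr_fun (lie_pow_of_lie_eq_smul (toEnd_lie_h_f (R := R) (M := M) t) n) u
  simp only [Ring.lie_def, LinearMap.sub_apply, End.mul_apply, toEnd_apply_apply,
    LinearMap.smul_apply] at hpow
  rw [sub_eq_iff_eq_add.mp hpow, map_sub, map_smul]
  module

lemma lie_e_pow_succ_toEnd_f_apply (t : IsSl2Triple h e f) {u : M} (hu : ⁅e, u⁆ = 0) (n : ℕ) :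
    ⁅e, (toEnd R L M f ^ (n + 1)) u⁆ =
      (n + 1 : R) • (toEnd R L M f ^ n) (⁅h, u⁆ - (n : R) • u) := by
  induction n with
  | zero => simp [leibniz_lie e, t.lie_e_f, hu]
  | succ n ih =>
    rw [pow_succ', End.mul_apply, toEnd_apply_apply, leibniz_lie, t.lie_e_f, ih,
      lie_h_pow_toEnd_f_apply t, lie_smul, ← toEnd_apply_apply R L M f, ← End.mul_apply,
      ← pow_succ']
    simp only [map_sub, map_smul]
    push_cast
    module

end Triple

variable {k L W : Type*} [Field k] [LieRing L] [LieAlgebra k L]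
  [AddCommGroup W] [Module k W] [LieRingModule L W] [LieModule k L W] {h e f : L}

section PrimitiveVector

-- If `f ^ (n + 1) u = 0` and `h u ≠ n u`, replace `u` by `h u - n u`, which is again killed by `e`
-- and already by `f ^ n`.
lemma exists_hasPrimitiveVectorWith_of_pow_toEnd_f_eq_zero [CharZero k] (t : IsSl2Triple h e f)
    {n : ℕ} {u : W} (hu : u ≠ 0) (heu : ⁅e, u⁆ = 0) (hfu : (toEnd k L W f ^ n) u = 0) :
    ∃ (m : ℕ) (v : W), t.HasPrimitiveVectorWith v (m : k) := by
  induction n generalizing u with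
  | zero => exact absurd (by simpa using hfu) hu
  | succ n ih =>
    by_cases hn : ⁅h, u⁆ - (n : k) • u = 0
    · exact ⟨n, u, hu, sub_eq_zero.mp hn, heu⟩
    · refine ih hn ?_ ?_
      · rw [lie_sub, leibniz_lie, ← lie_skew, t.lie_h_e_smul k]
        simp [heu]
      · have hef := lie_e_pow_succ_toEnd_f_apply (R := k) t heu n
        rw [hfu, lie_zero] at hef
        exact (smul_eq_zero_iff_right (Nat.cast_add_one_ne_zero n)).mp hef.symm

-- `IsSl2Triple.exists_hasPrimitiveVectorWith` needs `h` to be triangularizable, which is not known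
-- beforehand when `k` is not algebraically closed.
lemma exists_hasPrimitiveVectorWith_natCast [CharZero k] [FiniteDimensional k W] [Nontrivial W]
    (t : IsSl2Triple h e f) : ∃ (m : ℕ) (v : W), t.HasPrimitiveVectorWith v (m : k) := by
  have he : IsNilpotent (toEnd k L W e) := isNilpotent_of_lie_eq_smul two_ne_zero (toEnd_lie_h_e t)
  obtain ⟨n, hn⟩ : IsNilpotent (toEnd k L W f) :=
    isNilpotent_of_lie_eq_smul (neg_ne_zero.mpr two_ne_zero) (toEnd_lie_h_f t)
  obtain ⟨u, hu, heu⟩ := exists_ne_zero_apply_eq_zero_of_isNilpotent he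
  exact exists_hasPrimitiveVectorWith_of_pow_toEnd_f_eq_zero t hu heu
    (LinearMap.congr_fun hn u)

variable {t : IsSl2Triple h e f} {v : W} {μ : k}

lemma mem_span_e_of_lie_eq_zero (ht : t.toLieSubalgebra k = ⊤)
    (hv : t.HasPrimitiveVectorWith v μ) (hμ : μ ≠ 0) {x : L} (hx : ⁅x, v⁆ = 0) :
    x ∈ Submodule.span k {e} := by
  obtain ⟨a, c, b, rfl⟩ : ∃ a c b : k, x = a • e + c • f + b • ⁅e, f⁆ :=
    IsSl2Triple.mem_toLieSubalgebra_iff.mp (ht ▸ LieSubalgebra.mem_top x)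
  have hfv : c • ⁅f, v⁆ + (b * μ) • v = 0 := by
    simpa only [add_lie, smul_lie, t.lie_e_f, hv.lie_e, hv.lie_h, smul_zero, zero_add, smul_smul]
      using hx
  have hc : c = 0 := by
    have hefv : ⁅e, ⁅f, v⁆⁆ = μ • v := by
      rw [leibniz_lie, t.lie_e_f, hv.lie_e, hv.lie_h, lie_zero, add_zero]
    simpa [hv.lie_e, hefv, hμ, hv.ne_zero] using congrArg (⁅e, ·⁆) hfv
  have hb : b = 0 := by simpa [hc, hμ, hv.ne_zero] using hfv
  exact Submodule.mem_span_singleton.mpr ⟨a, by simp [hb, hc]⟩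

lemma span_range_pow_toEnd_f_eq_top [LieModule.IsIrreducible k L W]
    (ht : t.toLieSubalgebra k = ⊤) (hv : t.HasPrimitiveVectorWith v μ) :
    Submodule.span k (Set.range fun n : ℕ ↦ (toEnd k L W f ^ n) v) = ⊤ := by
  set S := Submodule.span k (Set.range fun n : ℕ ↦ (toEnd k L W f ^ n) v)
  have hmem (n : ℕ) : (toEnd k L W f ^ n) v ∈ S := Submodule.subset_span ⟨n, rfl⟩
  have stable {x : L} (hx : ∀ n : ℕ, ⁅x, (toEnd k L W f ^ n) v⁆ ∈ S) (w : W) (hw : w ∈ S) :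
      ⁅x, w⁆ ∈ S :=
    (Submodule.span_le (p := S.comap (toEnd k L W x))).mpr (Set.range_subset_iff.mpr hx) hw
  have he := stable (x := e) fun n ↦ by
    cases n with
    | zero => simp [hv.lie_e]
    | succ n => rw [hv.lie_e_pow_succ_toEnd_f]; exact S.smul_mem _ (hmem n)
  have hf := stable (x := f) fun n ↦ by rw [hv.lie_f_pow_toEnd_f]; exact hmem (n + 1)
  have hh := stable (x := h) fun n ↦ by rw [hv.lie_h_pow_toEnd_f]; exact S.smul_mem _ (hmem n)
  let N : LieSubmodule k L W :=
    { S with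
      lie_mem {x w} hw := by
        obtain ⟨a, c, b, rfl⟩ :=
          IsSl2Triple.mem_toLieSubalgebra_iff.mp (ht ▸ LieSubalgebra.mem_top x)
        rw [t.lie_e_f, add_lie, add_lie, smul_lie, smul_lie, smul_lie]
        exact S.add_mem (S.add_mem (S.smul_mem a (he w hw)) (S.smul_mem c (hf w hw)))
          (S.smul_mem b (hh w hw)) }
  have : Nontrivial N := ⟨⟨v, hmem 0⟩, 0, fun h0 ↦ hv.ne_zero (congrArg Subtype.val h0)⟩
  exact congrArg LieSubmodule.toSubmodule (N.eq_top_of_isIrreducible k L W)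

lemma finrank_eq_succ_of_hasPrimitiveVectorWith [CharZero k] [FiniteDimensional k W]
    [LieModule.IsIrreducible k L W] (ht : t.toLieSubalgebra k = ⊤) {m : ℕ}
    (hv : t.HasPrimitiveVectorWith v (m : k)) : finrank k W = m + 1 := by
  let b (i : Fin (m + 1)) : W := (toEnd k L W f ^ (i : ℕ)) v
  have hinj : Function.Injective fun i : Fin (m + 1) ↦ (m - 2 * (i : ℕ) : k) := fun i j hij ↦ by
    simpa [Fin.val_inj] using hij
  have hli : LinearIndependent k b :=
    (toEnd k L W h).eigenvectors_linearIndependent' _ hinj b fun i ↦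
      ⟨End.mem_eigenspace_iff.mpr (hv.lie_h_pow_toEnd_f i),
        hv.pow_toEnd_f_ne_zero_of_eq_nat rfl (Nat.le_of_lt_succ i.isLt)⟩
  have hspan : ⊤ ≤ Submodule.span k (Set.range b) := by
    rw [← span_range_pow_toEnd_f_eq_top ht hv, Submodule.span_le]
    rintro _ ⟨n, rfl⟩
    rcases lt_or_ge n (m + 1) with hn | hn
    · exact Submodule.subset_span ⟨⟨n, hn⟩, rfl⟩
    · have hzero : (toEnd k L W f ^ n) v = 0 :=
        Module.End.pow_map_zero_of_le hn (hv.pow_toEnd_f_eq_zero_of_eq_nat rfl)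
      simp [hzero]
  simpa using finrank_eq_card_basis (Basis.mk hli hspan)

end PrimitiveVector

lemma lieModuleHom_eq_zero_of_apply_eq_zero {R L M N : Type*} [CommRing R] [LieRing L]
    [LieAlgebra R L] [AddCommGroup M] [Module R M] [LieRingModule L M]
    [AddCommGroup N] [Module R N] [LieRingModule L N] [LieModule R L N]
    [LieModule.IsIrreducible R L M] (φ : M →ₗ⁅R,L⁆ N) {v : M} (hv : v ≠ 0) (hφ : φ v = 0) :
    φ = 0 := by
  have : Nontrivial φ.ker := ⟨⟨v, φ.mem_ker.mpr hφ⟩, 0, fun h ↦ hv (congrArg Subtype.val h)⟩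
  have hker : φ.ker = ⊤ := φ.ker.eq_top_of_isIrreducible R L M
  ext w
  exact φ.mem_ker.mp (hker ▸ LieSubmodule.mem_top w)

section EquivariantBilinear

variable {t : IsSl2Triple h e f} {v : W} {μ : k} (P : W →ₗ⁅k,L⁆ W →ₗ[k] L)

lemma apply_self_eq_zero [NeZero (2 : k)] (ht : t.toLieSubalgebra k = ⊤)
    (hv : t.HasPrimitiveVectorWith v μ) (hμ : μ ≠ 1) : P v v = 0 := by
  have he : ⁅P v v, e⁆ = 0 := by
    rw [← lie_skew, LieModuleHom.map_lie₂, hv.lie_e]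
    simp
  obtain ⟨a, ha⟩ := Submodule.mem_span_singleton.mp
    (mem_span_e_of_lie_eq_zero ht (hasPrimitiveVectorWith_e t) two_ne_zero he)
  have hweight : (2 : k) • P v v = (2 * μ) • P v v :=
    calc (2 : k) • P v v = ⁅h, P v v⁆ := by rw [← ha, lie_smul, t.lie_h_e_smul k, smul_comm]
      _ = (2 * μ) • P v v := by
        rw [LieModuleHom.map_lie₂, hv.lie_h, map_smul, map_smul, LinearMap.smul_apply]
        module
  rw [← sub_eq_zero, ← sub_smul, smul_eq_zero] at hweight
  refine hweight.resolve_left ?_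
  rw [← mul_one_sub]
  exact mul_ne_zero two_ne_zero (sub_ne_zero.mpr hμ.symm)

lemma apply_mem_span_e [NeZero (2 : k)] (ht : t.toLieSubalgebra k = ⊤)
    (hv : t.HasPrimitiveVectorWith v μ) (hμ : μ ≠ 0) (hPvv : P v v = 0)
    (hsymm : ∀ u w, P u w = P w u)
    (hcyc : ∀ u v w, ⁅P u v, w⁆ + ⁅P v w, u⁆ + ⁅P w u, v⁆ = 0) (w : W) :
    P v w ∈ Submodule.span k {e} := by
  refine mem_span_e_of_lie_eq_zero ht hv hμ ?_
  have htwice : (2 : k) • ⁅P v w, v⁆ = 0 := by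
    simpa only [hPvv, zero_lie, zero_add, hsymm w v, ← two_smul k] using hcyc v v w
  exact (smul_eq_zero_iff_right two_ne_zero).mp htwice

lemma apply_pow_toEnd_f_eq_zero [CharZero k] (hv : t.HasPrimitiveVectorWith v μ)
    (hP : ∀ w, P v w ∈ Submodule.span k {e}) (n : ℕ) : P v ((toEnd k L W f ^ n) v) = 0 := by
  have lie_e_apply (w : W) : ⁅e, P v w⁆ = 0 := by
    obtain ⟨a, ha⟩ := Submodule.mem_span_singleton.mp (hP w)
    rw [← ha, lie_smul, lie_self, smul_zero]
  have lie_h_apply (w : W) : ⁅h, P v w⁆ = (2 : k) • P v w := by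
    obtain ⟨a, ha⟩ := Submodule.mem_span_singleton.mp (hP w)
    rw [← ha, lie_smul, t.lie_h_e_smul k, smul_comm]
  have hweight : (2 * (μ - n - 1)) • P v ((toEnd k L W f ^ n) v) = 0 := by
    have hh := lie_h_apply ((toEnd k L W f ^ n) v)
    rw [LieModuleHom.map_lie₂, hv.lie_h, hv.lie_h_pow_toEnd_f, map_smul, map_smul,
      LinearMap.smul_apply, ← sub_eq_zero] at hh
    rw [← hh]
    module
  have hraise : ((n + 1) * (μ - n)) • P v ((toEnd k L W f ^ n) v) = 0 := by
    simpa only [LieModuleHom.map_lie₂, hv.lie_e, hv.lie_e_pow_succ_toEnd_f, map_zero,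
      LinearMap.zero_apply, zero_add, map_smul] using lie_e_apply ((toEnd k L W f ^ (n + 1)) v)
  by_cases hn : μ - n = 1
  · rw [hn, mul_one] at hraise
    exact (smul_eq_zero_iff_right (Nat.cast_add_one_ne_zero n)).mp hraise
  · exact (smul_eq_zero_iff_right (mul_ne_zero two_ne_zero (sub_ne_zero.mpr hn))).mp hweight

theorem symmetric_cyclic_eq_zero_of_hasPrimitiveVectorWith [CharZero k]
    [LieModule.IsIrreducible k L W] (ht : t.toLieSubalgebra k = ⊤)
    (hv : t.HasPrimitiveVectorWith v μ) (hμ₀ : μ ≠ 0) (hμ₁ : μ ≠ 1) (hsymm : ∀ u w, P u w = P w u)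
    (hcyc : ∀ u v w, ⁅P u v, w⁆ + ⁅P v w, u⁆ + ⁅P w u, v⁆ = 0) : P = 0 := by
  have hPvv : P v v = 0 := apply_self_eq_zero P ht hv hμ₁
  have hmem := apply_mem_span_e P ht hv hμ₀ hPvv hsymm hcyc
  refine lieModuleHom_eq_zero_of_apply_eq_zero P hv.ne_zero ?_
  refine LinearMap.ext_on_range (span_range_pow_toEnd_f_eq_top ht hv) fun n ↦ ?_
  exact apply_pow_toEnd_f_eq_zero P hv hmem n

theorem symmetric_cyclic_eq_zero_of_finrank_ne_two [CharZero k] [FiniteDimensional k W]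
    [LieModule.IsIrreducible k L W] (ht : t.toLieSubalgebra k = ⊤) (hdim : finrank k W ≠ 2)
    (hsymm : ∀ u w, P u w = P w u)
    (hcyc : ∀ u v w, ⁅P u v, w⁆ + ⁅P v w, u⁆ + ⁅P w u, v⁆ = 0) : P = 0 := by
  have : Nontrivial W := LieModule.nontrivial_of_isIrreducible k L W
  obtain ⟨m, v, hv⟩ := exists_hasPrimitiveVectorWith_natCast (k := k) (W := W) t
  have hfinrank : finrank k W = m + 1 := finrank_eq_succ_of_hasPrimitiveVectorWith ht hv
  have hm : (m : k) ≠ 1 := fun hm ↦ hdim (by rw [hfinrank, Nat.cast_eq_one.mp hm])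
  rcases eq_or_ne m 0 with rfl | hm₀
  · refine lieModuleHom_eq_zero_of_apply_eq_zero P hv.ne_zero (LinearMap.ext fun w ↦ ?_)
    obtain ⟨c, rfl⟩ := (finrank_eq_one_iff_of_nonzero' v hv.ne_zero).mp hfinrank w
    simp [apply_self_eq_zero P ht hv hm]
  · exact symmetric_cyclic_eq_zero_of_hasPrimitiveVectorWith P ht hv (Nat.cast_ne_zero.mpr hm₀) hm
      hsymm hcyc

end EquivariantBilinear

section SpecialLinear

open LieAlgebra.SpecialLinear

lemma isSl2Triple_single {n R : Type*} [Fintype n] [DecidableEq n] [CommRing R] [Nontrivial R]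
    {i j : n} (hij : i ≠ j) :
    IsSl2Triple (singleSubSingle i j (1 : R)) (single i j hij 1) (single j i hij.symm 1) where
  h_ne_zero h0 := by
    simpa [hij.symm] using congrArg (fun A : sl n R ↦ A.val i i) h0
  lie_e_f := by
    ext : 1
    simp [Ring.lie_def]
  lie_h_e_nsmul := by
    ext : 1
    simp [Ring.lie_def, sub_mul, mul_sub, hij.symm, two_smul]
  lie_h_f_nsmul := by
    ext : 1
    simp [Ring.lie_def, sub_mul, mul_sub, hij, two_smul, ← sub_eq_add_neg]

lemma toLieSubalgebra_single_eq_top (R : Type*) [CommRing R] [Nontrivial R] :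
    (isSl2Triple_single (n := Fin 2) (R := R) zero_ne_one).toLieSubalgebra R = ⊤ := by
  refine eq_top_iff.mpr fun A _ ↦ IsSl2Triple.mem_toLieSubalgebra_iff.mpr
    ⟨A.val 0 1, A.val 1 0, A.val 0 0, ?_⟩
  have htrace : A.val 1 1 = -A.val 0 0 := by
    rw [eq_neg_iff_add_eq_zero, add_comm, ← Matrix.trace_fin_two]
    exact LinearMap.mem_ker.mp A.property
  rw [(isSl2Triple_single zero_ne_one).lie_e_f]
  ext i j
  fin_cases i <;> fin_cases j <;> simp [htrace]

end SpecialLinear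

end SlTwo

/-- Over a field of characteristic zero, if `W` is a finite-dimensional
irreducible representation of `sl(2,k)` with `dim W ≠ 2` and `P : W × W → sl(2,k)` is a
symmetric bilinear map satisfying relations (1) and (2), then `P ≡ 0`. -/
theorem stmt_9 (k W : Type*) [Field k] [CharZero k]
    [AddCommGroup W] [Module k W] [LieRingModule (sl2 k) W] [LieModule k (sl2 k) W]
    [FiniteDimensional k W] [LieModule.IsIrreducible k (sl2 k) W]
    (hdim : Module.finrank k W ≠ 2)
    (P : W →ₗ[k] W →ₗ[k] sl2 k) (hPsymm : ∀ u v : W, P u v = P v u)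
    (h1 : ∀ u v w : W, ⁅P u v, w⁆ + ⁅P v w, u⁆ + ⁅P w u, v⁆ = 0)
    (h2 : ∀ (x : sl2 k) (u v : W), ⁅x, P u v⁆ = P ⁅x, u⁆ v + P u ⁅x, v⁆) :
    ∀ u v : W, P u v = 0 := by
  let φ : W →ₗ⁅k,sl2 k⁆ W →ₗ[k] sl2 k :=
    { P with
      map_lie' := fun {x u} ↦ LinearMap.ext fun v ↦ by
        rw [LieHom.lie_apply]
        exact eq_sub_of_add_eq (h2 x u v).symm }
  have hφ : φ = 0 :=
    SlTwo.symmetric_cyclic_eq_zero_of_finrank_ne_two φ (SlTwo.toLieSubalgebra_single_eq_top k) hdim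
      hPsymm h1
  intro u v
  exact LinearMap.congr_fun (LieModuleHom.congr_fun hφ u) v
end

section
/- Let $k$ be a field of characteristic zero, $V$ a finite-dimensional representation of $\mathfrak{sl}(2,k)$, and $W \subseteq V$ a non-trivial irreducible submodule with $\dim W \neq 3$. If $P : V \times V \to \mathfrak{sl}(2,k)$ is a symmetric bilinear map satisfying relations (1) $P(u,v)(w) + P(v,w)(u) + P(w,u)(v) = 0$ and (2) $[x, P(u,v)] = P(x(u),v) + P(u,x(v))$, and $P(W,W) = \{0\}$, then $P \equiv 0$. -/
/-!
Let `m` be a highest weight vector of `W`, of weight `μ`. Non-triviality of `W` and `dim W ≠ 3` say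
that `μ ≠ 0` and `μ ≠ 2`, and then the annihilators of `m` and of `f m` are contained in the lines
through `e` and `f` respectively. Fix `v`. Since `P(W, W) = 0`, relation (1) says that
`(w, w') ↦ P(v, w) w'` is alternating on `W`. Hence `P(v, m) = a e` and `P(v, f m) = c f`, and
`a e (f m) + c f m = a μ m + c f m = 0`, so both vanish. Relation (1) now says that every `P(u, v)`
annihilates both `m` and `f m`, hence is zero.
-/

section Nilpotent

lemma mul_pow_sub_pow_mul_eq_smul {R A : Type*} [CommRing R] [Ring A] [Algebra R A] {a b : A}
    {c : R} (hab : a * b - b * a = c • b) (n : ℕ) :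
    a * b ^ n - b ^ n * a = (n * c) • b ^ n := by
  induction n with
  | zero => simp
  | succ n ih =>
    calc a * b ^ (n + 1) - b ^ (n + 1) * a
        = (a * b ^ n - b ^ n * a) * b + b ^ n * (a * b - b * a) := by
          rw [pow_succ]
          noncomm_ring
      _ = ((n + 1 : ℕ) * c) • b ^ (n + 1) := by
          rw [ih, hab, smul_mul_assoc, mul_smul_comm, ← pow_succ, ← add_smul]
          push_cast
          ring_nf

-- If no power of `b` vanished, `x ↦ a * x - x * a` would have the eigenvalues `n * c` for all `n`.
lemma isNilpotent_of_mul_sub_mul_eq_smul {k A : Type*} [Field k] [CharZero k] [Ring A]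
    [Algebra k A] [FiniteDimensional k A] {a b : A} {c : k} (hc : c ≠ 0)
    (hab : a * b - b * a = c • b) : IsNilpotent b := by
  by_contra hb
  have hpow (n : ℕ) : b ^ n ≠ 0 := fun hn ↦ hb ⟨n, hn⟩
  have hinj : Function.Injective fun n : ℕ ↦ n * c := fun i j hij ↦ by
    simpa [hc] using hij
  have heigen (n : ℕ) :
      Module.End.HasEigenvalue (LinearMap.mulLeft k a - LinearMap.mulRight k a) (n * c) :=
    Module.End.hasEigenvalue_of_hasEigenvector <| Module.End.hasEigenvector_iff.2
      ⟨by simpa [Module.End.mem_eigenspace_iff] using mul_pow_sub_pow_mul_eq_smul hab n, hpow n⟩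
  exact Set.infinite_range_of_injective hinj <|
    (Module.End.finite_hasEigenvalue _).subset (Set.range_subset_iff.2 heigen)

end Nilpotent

open LieModule Module

section Commutation

variable {R L M : Type*} [CommRing R] [LieRing L] [LieAlgebra R L]
  [AddCommGroup M] [Module R M] [LieRingModule L M] [LieModule R L M] {h e f : L}

lemma lie_h_toEnd_f_pow (t : IsSl2Triple h e f) (v : M) (n : ℕ) :
    ⁅h, (toEnd R L M f ^ n) v⁆ = (toEnd R L M f ^ n) (⁅h, v⁆ - (2 * n : R) • v) := by
  induction n with
  | zero => simp
  | succ n ih =>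
    simp only [pow_succ', Module.End.mul_apply, toEnd_apply_apply] at ih ⊢
    rw [leibniz_lie h, t.lie_lie_smul_f R, ih]
    simp only [map_sub, map_smul, lie_sub, lie_smul, neg_lie, smul_lie]
    push_cast
    module

lemma lie_e_toEnd_f_pow_succ (t : IsSl2Triple h e f) {v : M} (hv : ⁅e, v⁆ = 0) (n : ℕ) :
    ⁅e, (toEnd R L M f ^ (n + 1)) v⁆ =
      (n + 1 : R) • (toEnd R L M f ^ n) (⁅h, v⁆ - (n : R) • v) := by
  induction n with
  | zero => simp [leibniz_lie e, t.lie_e_f, hv]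
  | succ n ih =>
    rw [pow_succ', Module.End.mul_apply, toEnd_apply_apply, leibniz_lie e, t.lie_e_f, ih,
      lie_h_toEnd_f_pow t]
    simp only [pow_succ', Module.End.mul_apply, toEnd_apply_apply, map_sub, map_smul, lie_sub,
      lie_smul]
    push_cast
    module

lemma lie_e_lie_h_eq_zero (t : IsSl2Triple h e f) {v : M} (hv : ⁅e, v⁆ = 0) :
    ⁅e, ⁅h, v⁆⁆ = 0 := by
  rw [leibniz_lie e, hv, ← lie_skew, t.lie_h_e_nsmul, neg_lie, nsmul_lie, hv]
  simp

lemma lie_e_lie_f_eq_smul {t : IsSl2Triple h e f} {m : M} {μ : R}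
    (p : t.HasPrimitiveVectorWith m μ) : ⁅e, ⁅f, m⁆⁆ = μ • m := by
  simpa using p.lie_e_pow_succ_toEnd_f 0

end Commutation

section ExistsPrimitiveVector

variable {k L M : Type*} [Field k] [LieRing L] [LieAlgebra k L]
  [AddCommGroup M] [Module k M] [LieRingModule L M] [LieModule k L M] [FiniteDimensional k M]
  {h e f : L}

variable (k M) in
lemma isNilpotent_toEnd_e [CharZero k] (t : IsSl2Triple h e f) :
    IsNilpotent (toEnd k L M e) := by
  refine isNilpotent_of_mul_sub_mul_eq_smul (a := toEnd k L M h) (two_ne_zero (α := k)) ?_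
  ext v
  simp [← lie_lie, t.lie_h_e_smul k]

variable (k M) in
lemma exists_ne_zero_lie_e_eq_zero [CharZero k] [Nontrivial M] (t : IsSl2Triple h e f) :
    ∃ v : M, v ≠ 0 ∧ ⁅e, v⁆ = 0 := by
  have hker : LinearMap.ker (toEnd k L M e) ≠ ⊥ := fun hbot ↦
    (isNilpotent_toEnd_e k M t).not_isUnit ((LinearMap.isUnit_iff_ker_eq_bot _).2 hbot)
  obtain ⟨v, hv, hv0⟩ := Submodule.exists_mem_ne_zero_of_ne_bot hker
  exact ⟨v, hv0, by simpa using hv⟩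

-- `h` preserves the finite-dimensional space `ker e`; without eigenvector, `h - μ` is injective
-- there, hence surjective.
lemma exists_lie_h_sub_smul_eq {t : IsSl2Triple h e f} {μ : k}
    (hμ : ∀ m : M, ¬ t.HasPrimitiveVectorWith m μ) {w : M} (hw : ⁅e, w⁆ = 0) :
    ∃ u : M, ⁅e, u⁆ = 0 ∧ ⁅h, u⁆ - μ • u = w := by
  set K := LinearMap.ker (toEnd k L M e)
  have hK : ∀ x ∈ K, (toEnd k L M h - μ • 1) x ∈ K := fun x hx ↦ by
    have hx' : ⁅e, x⁆ = 0 := by simpa [K] using hx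
    simp [K, lie_e_lie_h_eq_zero t hx', hx']
  set g : K →ₗ[k] K := (toEnd k L M h - μ • 1).restrict hK
  have g_apply (x : K) : (g x : M) = ⁅h, (x : M)⁆ - μ • (x : M) := by
    simp [g, LinearMap.restrict_apply]
  have hg : Function.Injective g := (injective_iff_map_eq_zero g).2 fun x hx ↦ by
    by_contra hx0
    exact hμ x ⟨by simpa using hx0, by simpa [hx, eq_comm, sub_eq_zero] using g_apply x,
      LinearMap.mem_ker.1 x.2⟩
  obtain ⟨u, hu⟩ := LinearMap.injective_iff_surjective.1 hg ⟨w, by simpa [K] using hw⟩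
  exact ⟨u, LinearMap.mem_ker.1 u.2, by rw [← g_apply, hu]⟩

lemma toEnd_f_pow_eq_zero_of_succ [CharZero k] {t : IsSl2Triple h e f} {n : ℕ}
    (hn : ∀ m : M, ¬ t.HasPrimitiveVectorWith m (n : k))
    (hf : ∀ w : M, ⁅e, w⁆ = 0 → (toEnd k L M f ^ (n + 1)) w = 0) {w : M} (hw : ⁅e, w⁆ = 0) :
    (toEnd k L M f ^ n) w = 0 := by
  obtain ⟨u, hu, rfl⟩ := exists_lie_h_sub_smul_eq hn hw
  have key := lie_e_toEnd_f_pow_succ (R := k) t hu n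
  rw [hf u hu, lie_zero] at key
  exact (smul_eq_zero.1 key.symm).resolve_left n.cast_add_one_ne_zero

variable (k M) in
/-- Unlike `IsSl2Triple.exists_hasPrimitiveVectorWith`, no triangularizability is assumed. -/
lemma exists_nat_hasPrimitiveVectorWith [CharZero k] [Nontrivial M] (t : IsSl2Triple h e f) :
    ∃ (n : ℕ) (m : M), t.HasPrimitiveVectorWith m (n : k) := by
  by_contra! hno
  have hf (n : ℕ) : ¬ ∀ w : M, ⁅e, w⁆ = 0 → (toEnd k L M f ^ n) w = 0 := by
    induction n with
    | zero =>
      obtain ⟨v, hv0, hv⟩ := exists_ne_zero_lie_e_eq_zero k M t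
      exact fun hzero ↦ hv0 (by simpa using hzero v hv)
    | succ n ih => exact fun hsucc ↦ ih fun w hw ↦ toEnd_f_pow_eq_zero_of_succ (hno n) hsucc hw
  obtain ⟨N, hN⟩ := isNilpotent_toEnd_e k M t.symm
  exact hf N fun w _ ↦ by simp [hN]

end ExistsPrimitiveVector

section Irreducible

section CommRing

variable {R L M : Type*} [CommRing R] [LieRing L] [LieAlgebra R L]
  [AddCommGroup M] [Module R M] [LieRingModule L M] [LieModule R L M]

lemma isTrivial_of_mem_maxTrivSubmodule [IsIrreducible R L M] {m : M} (hm0 : m ≠ 0)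
    (hm : m ∈ maxTrivSubmodule R L M) : IsTrivial L M := by
  have : Nontrivial (maxTrivSubmodule R L M) :=
    ⟨⟨m, hm⟩, 0, fun hzero ↦ hm0 (congrArg Subtype.val hzero)⟩
  exact (isTrivial_iff_max_triv_eq_top R L M).2 (LieSubmodule.eq_top_of_isIrreducible R L M _)

lemma span_toEnd_f_pow_eq_top [IsIrreducible R L M] {h e f : L} {t : IsSl2Triple h e f}
    (ht : ∀ x, x ∈ Submodule.span R {e, h, f}) {m : M} {μ : R} (p : t.HasPrimitiveVectorWith m μ) :
    Submodule.span R (Set.range fun i : ℕ ↦ (toEnd R L M f ^ i) m) = ⊤ := by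
  set S := Submodule.span R (Set.range fun i : ℕ ↦ (toEnd R L M f ^ i) m)
  have hmem (i : ℕ) : (toEnd R L M f ^ i) m ∈ S := Submodule.subset_span ⟨i, rfl⟩
  have he (i : ℕ) : ⁅e, (toEnd R L M f ^ i) m⁆ ∈ S := by
    cases i with
    | zero => simp [p.lie_e]
    | succ i => simpa only [p.lie_e_pow_succ_toEnd_f] using S.smul_mem _ (hmem i)
  have hh (i : ℕ) : ⁅h, (toEnd R L M f ^ i) m⁆ ∈ S := by
    simpa only [p.lie_h_pow_toEnd_f] using S.smul_mem _ (hmem i)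
  have hf (i : ℕ) : ⁅f, (toEnd R L M f ^ i) m⁆ ∈ S := by
    simpa only [p.lie_f_pow_toEnd_f] using hmem (i + 1)
  let N : LieSubmodule R L M :=
    { S with
      lie_mem := fun {x v} hv ↦
        LinearMap.BilinMap.apply_apply_mem_of_mem_span S _ _ (toEnd R L M : L →ₗ[R] End R M)
          (by rintro _ (rfl | rfl | rfl) _ ⟨i, rfl⟩; exacts [he i, hh i, hf i]) x v (ht x) hv }
  have hmN : m ∈ N := hmem 0
  have : Nontrivial N := ⟨⟨m, hmN⟩, 0, fun hm0 ↦ p.ne_zero (congrArg Subtype.val hm0)⟩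
  exact congrArg LieSubmodule.toSubmodule (N.eq_top_of_isIrreducible R L M)

end CommRing

variable {k L M : Type*} [Field k] [LieRing L] [LieAlgebra k L]
  [AddCommGroup M] [Module k M] [LieRingModule L M] [LieModule k L M] {h e f : L}
  {t : IsSl2Triple h e f} {m : M}

lemma linearIndependent_toEnd_f_pow [CharZero k] {n : ℕ}
    (p : t.HasPrimitiveVectorWith m (n : k)) :
    LinearIndependent k fun i : Fin (n + 1) ↦ (toEnd k L M f ^ (i : ℕ)) m :=
  End.eigenvectors_linearIndependent' (toEnd k L M h) (fun i : Fin (n + 1) ↦ (n - 2 * (i : ℕ) : k))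
    (fun i j hij ↦ by simpa [Fin.ext_iff] using hij) _ fun i ↦
      End.hasEigenvector_iff.2 ⟨End.mem_eigenspace_iff.2 (p.lie_h_pow_toEnd_f i),
        p.pow_toEnd_f_ne_zero_of_eq_nat rfl (Nat.lt_succ_iff.1 i.2)⟩

lemma finrank_eq_of_hasPrimitiveVectorWith [CharZero k] [FiniteDimensional k M]
    [IsIrreducible k L M] (ht : ∀ x, x ∈ Submodule.span k {e, h, f}) {n : ℕ}
    (p : t.HasPrimitiveVectorWith m (n : k)) : finrank k M = n + 1 := by
  have hspan : Submodule.span k (Set.range fun i : Fin (n + 1) ↦ (toEnd k L M f ^ (i : ℕ)) m)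
      = ⊤ := by
    rw [eq_top_iff, ← span_toEnd_f_pow_eq_top ht p, Submodule.span_le]
    rintro _ ⟨i, rfl⟩
    rcases lt_or_ge i (n + 1) with hi | hi
    · exact Submodule.subset_span ⟨⟨i, hi⟩, rfl⟩
    · have hzero : (toEnd k L M f ^ i) m = 0 :=
        Module.End.pow_map_zero_of_le hi (p.pow_toEnd_f_eq_zero_of_eq_nat rfl)
      simp [hzero]
  simpa using finrank_eq_card_basis (Basis.mk (linearIndependent_toEnd_f_pow p) hspan.ge)

lemma isTrivial_of_hasPrimitiveVectorWith_zero [CharZero k] [FiniteDimensional k M]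
    [IsIrreducible k L M] (ht : ∀ x, x ∈ Submodule.span k {e, h, f})
    (p : t.HasPrimitiveVectorWith m (0 : k)) : IsTrivial L M := by
  have hf : ⁅f, m⁆ = 0 := by
    simpa using p.pow_toEnd_f_eq_zero_of_eq_nat (n := 0) Nat.cast_zero.symm
  refine isTrivial_of_mem_maxTrivSubmodule (R := k) p.ne_zero fun x ↦ ?_
  obtain ⟨a, b, c, rfl⟩ := Submodule.mem_span_triple.1 (ht x)
  simp [p.lie_e, p.lie_h, hf]

end Irreducible

section Annihilator

variable {k L M : Type*} [Field k] [LieRing L] [LieAlgebra k L]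
  [AddCommGroup M] [Module k M] [LieRingModule L M] [LieModule k L M] {h e f : L}
  {t : IsSl2Triple h e f} {μ : k} {m : M}

lemma linearIndependent_pair_lie_f (p : t.HasPrimitiveVectorWith m μ) (hμ : μ ≠ 0) :
    LinearIndependent k ![m, ⁅f, m⁆] := by
  refine LinearIndependent.pair_iff.2 fun a c hac ↦ ?_
  have hc : c = 0 := by
    simpa [p.lie_e, lie_e_lie_f_eq_smul p, hμ, p.ne_zero] using congrArg (⁅e, ·⁆) hac
  exact ⟨by simpa [hc, p.ne_zero] using hac, hc⟩

lemma mem_span_e_of_lie_eq_zero (p : t.HasPrimitiveVectorWith m μ) (hμ : μ ≠ 0) {x : L}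
    (hx : x ∈ Submodule.span k {e, h, f}) (hxm : ⁅x, m⁆ = 0) : x ∈ Submodule.span k {e} := by
  obtain ⟨a, b, c, rfl⟩ := Submodule.mem_span_triple.1 hx
  have hrel : (b * μ) • m + c • ⁅f, m⁆ = 0 := by
    simpa [p.lie_e, p.lie_h, smul_smul] using hxm
  obtain ⟨hb, rfl⟩ := LinearIndependent.pair_iff.1 (linearIndependent_pair_lie_f p hμ) _ _ hrel
  obtain rfl : b = 0 := by simpa [hμ] using hb
  exact Submodule.mem_span_singleton.2 ⟨a, by simp⟩

lemma mem_span_f_of_lie_lie_f_eq_zero [NeZero (2 : k)] (p : t.HasPrimitiveVectorWith m μ)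
    (hμ : μ ≠ 0) (hμ2 : μ ≠ 2) {x : L} (hx : x ∈ Submodule.span k {e, h, f})
    (hxm : ⁅x, ⁅f, m⁆⁆ = 0) : x ∈ Submodule.span k {f} := by
  obtain ⟨a, b, c, rfl⟩ := Submodule.mem_span_triple.1 hx
  have hhf : ⁅h, ⁅f, m⁆⁆ = (μ - 2) • ⁅f, m⁆ := by simpa using p.lie_h_pow_toEnd_f 1
  have hhff : ⁅h, ⁅f, ⁅f, m⁆⁆⁆ = (μ - 2 * 2) • ⁅f, ⁅f, m⁆⁆ := by
    simpa [pow_two] using p.lie_h_pow_toEnd_f 2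
  have hrel : (a * μ) • m + (b * (μ - 2)) • ⁅f, m⁆ + c • ⁅f, ⁅f, m⁆⁆ = 0 := by
    simpa [lie_e_lie_f_eq_smul p, hhf, smul_smul] using hxm
  -- `h - (μ - 4)` removes the term in `f² m`, which may or may not vanish.
  have hrel' : (2 * 2 * (a * μ)) • m + (2 * (b * (μ - 2))) • ⁅f, m⁆ = 0 := by
    have := congrArg (fun y ↦ ⁅h, y⁆ - (μ - 2 * 2) • y) hrel
    simp only [lie_add, lie_smul, p.lie_h, hhf, hhff, lie_zero, smul_zero, sub_zero] at this
    rw [← this]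
    module
  obtain ⟨ha, hb⟩ := LinearIndependent.pair_iff.1 (linearIndependent_pair_lie_f p hμ) _ _ hrel'
  obtain rfl : a = 0 := by simpa [hμ, two_ne_zero] using ha
  obtain rfl : b = 0 := by simpa [sub_ne_zero.2 hμ2, two_ne_zero] using hb
  exact Submodule.mem_span_singleton.2 ⟨c, by simp⟩

end Annihilator

/-- A symmetric bilinear map `P : M × M → L` satisfying relation (1): the odd-odd bracket of a
would-be Lie superalgebra `L ⊕ M`, subject to the Jacobi identity for three odd elements but not to
the `L`-equivariance of relation (2). -/
structure IsOddBracket {R L M : Type*} [CommRing R] [LieRing L] [LieAlgebra R L]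
    [AddCommGroup M] [Module R M] [LieRingModule L M] (P : M →ₗ[R] M →ₗ[R] L) : Prop where
  symm : ∀ u v, P u v = P v u
  jacobi : ∀ u v w, ⁅P u v, w⁆ + ⁅P v w, u⁆ + ⁅P w u, v⁆ = 0

namespace IsOddBracket

section CommRing

variable {R L M : Type*} [CommRing R] [LieRing L] [LieAlgebra R L]
  [AddCommGroup M] [Module R M] [LieRingModule L M] {P : M →ₗ[R] M →ₗ[R] L}

lemma lie_add_lie_eq_zero (hP : IsOddBracket P) {w w' : M} (hww' : P w w' = 0) (v : M) :
    ⁅P v w, w'⁆ + ⁅P v w', w⁆ = 0 := by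
  simpa [hww', hP.symm w' v, add_comm] using hP.jacobi w w' v

lemma lie_self_eq_zero [IsDomain R] [NeZero (2 : R)] [IsTorsionFree R M] (hP : IsOddBracket P)
    {w : M} (hww : P w w = 0) (v : M) : ⁅P v w, w⁆ = 0 := by
  simpa [← two_smul R, two_ne_zero] using hP.lie_add_lie_eq_zero hww v

lemma lie_eq_zero_of_forall_apply_eq_zero (hP : IsOddBracket P) {w : M} (hw : ∀ v, P v w = 0)
    (u v : M) : ⁅P u v, w⁆ = 0 := by
  simpa [hw, hP.symm w] using hP.jacobi u v w

end CommRing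

variable {k L M : Type*} [Field k] [NeZero (2 : k)] [LieRing L] [LieAlgebra k L]
  [AddCommGroup M] [Module k M] [LieRingModule L M] [LieModule k L M] {P : M →ₗ[k] M →ₗ[k] L}
  {h e f : L} {t : IsSl2Triple h e f} {μ : k} {m : M}

lemma apply_primitive_eq_zero (hP : IsOddBracket P) (ht : ∀ x, x ∈ Submodule.span k {e, h, f})
    (p : t.HasPrimitiveVectorWith m μ) (hμ : μ ≠ 0) (hμ2 : μ ≠ 2) (hmm : P m m = 0)
    (hmf : P m ⁅f, m⁆ = 0) (hff : P ⁅f, m⁆ ⁅f, m⁆ = 0) (v : M) :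
    P v m = 0 ∧ P v ⁅f, m⁆ = 0 := by
  obtain ⟨a, ha⟩ := Submodule.mem_span_singleton.1 <|
    mem_span_e_of_lie_eq_zero p hμ (ht (P v m)) (hP.lie_self_eq_zero hmm v)
  obtain ⟨c, hc⟩ := Submodule.mem_span_singleton.1 <|
    mem_span_f_of_lie_lie_f_eq_zero p hμ hμ2 (ht (P v ⁅f, m⁆)) (hP.lie_self_eq_zero hff v)
  have hrel : (a * μ) • m + c • ⁅f, m⁆ = 0 := by
    simpa [← ha, ← hc, lie_e_lie_f_eq_smul p, smul_smul] using hP.lie_add_lie_eq_zero hmf v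
  obtain ⟨haμ, rfl⟩ := LinearIndependent.pair_iff.1 (linearIndependent_pair_lie_f p hμ) _ _ hrel
  obtain rfl : a = 0 := by simpa [hμ] using haμ
  exact ⟨by simp [← ha], by simp [← hc]⟩

theorem apply_eq_zero_of_primitive (hP : IsOddBracket P)
    (ht : ∀ x, x ∈ Submodule.span k {e, h, f}) (p : t.HasPrimitiveVectorWith m μ) (hμ : μ ≠ 0)
    (hμ2 : μ ≠ 2) (hmm : P m m = 0) (hmf : P m ⁅f, m⁆ = 0) (hff : P ⁅f, m⁆ ⁅f, m⁆ = 0)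
    (u v : M) : P u v = 0 := by
  have hzero := hP.apply_primitive_eq_zero ht p hμ hμ2 hmm hmf hff
  obtain ⟨a, ha⟩ := Submodule.mem_span_singleton.1 <| mem_span_e_of_lie_eq_zero p hμ (ht (P u v)) <|
    hP.lie_eq_zero_of_forall_apply_eq_zero (fun w ↦ (hzero w).1) u v
  have hae : ⁅a • e, ⁅f, m⁆⁆ = 0 :=
    ha ▸ hP.lie_eq_zero_of_forall_apply_eq_zero (fun w ↦ (hzero w).2) u v
  obtain rfl : a = 0 := by simpa [lie_e_lie_f_eq_smul p, hμ, p.ne_zero] using hae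
  simp [← ha]

end IsOddBracket

section SpecialLinear

open LieAlgebra.SpecialLinear

variable (k : Type*) [Field k]

lemma isSl2Triple_sl2 :
    IsSl2Triple (singleSubSingle 0 1 1 : sl2 k) (single 0 1 zero_ne_one 1)
      (single 1 0 one_ne_zero 1) where
  h_ne_zero hzero := by
    simpa [Matrix.single] using congrFun (congrFun (congrArg Subtype.val hzero) 0) 0
  lie_e_f := by
    ext i j
    rw [sl_bracket]
    fin_cases i <;> fin_cases j <;> simp [Matrix.single, Matrix.mul_apply]
  lie_h_e_nsmul := by
    ext i j
    rw [sl_bracket]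
    fin_cases i <;> fin_cases j <;> norm_num [Matrix.single, Matrix.mul_apply]
  lie_h_f_nsmul := by
    ext i j
    rw [sl_bracket]
    fin_cases i <;> fin_cases j <;> norm_num [Matrix.single, Matrix.mul_apply]

variable {k} in
lemma mem_span_isSl2Triple_sl2 (x : sl2 k) :
    x ∈ Submodule.span k {(single 0 1 zero_ne_one 1 : sl2 k), singleSubSingle 0 1 1,
      single 1 0 one_ne_zero 1} := by
  have htrace : x.1 0 0 + x.1 1 1 = 0 := by
    rw [← Matrix.trace_fin_two]
    exact LinearMap.mem_ker.1 x.2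
  refine Submodule.mem_span_triple.2 ⟨x.1 0 1, x.1 0 0, x.1 1 0, ?_⟩
  ext i j
  fin_cases i <;> fin_cases j <;>
    simp [Matrix.single, eq_neg_of_add_eq_zero_right htrace]

end SpecialLinear

theorem stmt_11_general {k L V : Type*} [Field k] [CharZero k] [LieRing L] [LieAlgebra k L]
    [AddCommGroup V] [Module k V] [LieRingModule L V] [LieModule k L V] {h e f : L}
    (t : IsSl2Triple h e f) (ht : ∀ x, x ∈ Submodule.span k {e, h, f})
    (W : LieSubmodule k L V) [FiniteDimensional k W]
    (hWnontriv : ∃ x : L, ∃ w ∈ W, ⁅x, w⁆ ≠ 0) (hWirr : IsIrreducible k L W)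
    (hdim : finrank k W ≠ 3)
    (P : V →ₗ[k] V →ₗ[k] L) (hPsymm : ∀ u v : V, P u v = P v u)
    (h1 : ∀ u v w : V, ⁅P u v, w⁆ + ⁅P v w, u⁆ + ⁅P w u, v⁆ = 0)
    (hPWW : ∀ w ∈ W, ∀ w' ∈ W, P w w' = 0) (u v : V) : P u v = 0 := by
  have : Nontrivial W := nontrivial_of_isIrreducible k L W
  obtain ⟨n, ⟨m, hm⟩, pW⟩ := exists_nat_hasPrimitiveVectorWith k W t
  have hn0 : n ≠ 0 := by
    rintro rfl
    have := isTrivial_of_hasPrimitiveVectorWith_zero ht (by simpa using pW)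
    obtain ⟨x, w, hw, hxw⟩ := hWnontriv
    exact hxw (congrArg Subtype.val (trivial_lie_zero L W x ⟨w, hw⟩))
  have hn2 : n ≠ 2 := by
    rintro rfl
    exact hdim (finrank_eq_of_hasPrimitiveVectorWith ht pW)
  have p : t.HasPrimitiveVectorWith m (n : k) :=
    ⟨fun hm0 ↦ pW.ne_zero (by simpa using hm0), congrArg Subtype.val pW.lie_h,
      congrArg Subtype.val pW.lie_e⟩
  have hfm : ⁅f, m⁆ ∈ W := W.lie_mem hm
  exact IsOddBracket.apply_eq_zero_of_primitive ⟨hPsymm, h1⟩ ht p (mod_cast hn0) (mod_cast hn2)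
    (hPWW m hm m hm) (hPWW m hm _ hfm) (hPWW _ hfm _ hfm) u v

/-- Over a field of characteristic zero, let `V` be a finite-dimensional
representation of `sl(2,k)` and `W ⊆ V` a non-trivial irreducible submodule with
`dim W ≠ 3`. If `P : V × V → sl(2,k)` is symmetric bilinear, satisfies relations (1) and
(2), and `P(W,W) = 0`, then `P ≡ 0`. -/
theorem stmt_11 (k V : Type*) [Field k] [CharZero k]
    [AddCommGroup V] [Module k V] [LieRingModule (sl2 k) V] [LieModule k (sl2 k) V]
    [FiniteDimensional k V]
    (W : LieSubmodule k (sl2 k) V)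
    (hWnontriv : ∃ x : sl2 k, ∃ w ∈ W, ⁅x, w⁆ ≠ 0)
    (hWirr : LieModule.IsIrreducible k (sl2 k) ↥W)
    (hdim : Module.finrank k ↥W ≠ 3)
    (P : V →ₗ[k] V →ₗ[k] sl2 k) (hPsymm : ∀ u v : V, P u v = P v u)
    (h1 : ∀ u v w : V, ⁅P u v, w⁆ + ⁅P v w, u⁆ + ⁅P w u, v⁆ = 0)
    (h2 : ∀ (x : sl2 k) (u v : V), ⁅x, P u v⁆ = P ⁅x, u⁆ v + P u ⁅x, v⁆)
    (hPWW : ∀ w ∈ W, ∀ w' ∈ W, P w w' = 0) :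
    ∀ u v : V, P u v = 0 := by
  exact stmt_11_general (isSl2Triple_sl2 k) mem_span_isSl2Triple_sl2 W hWnontriv hWirr hdim P hPsymm
    h1 hPWW
end
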